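/- Let n ≥ 2, 2 ≤ p ≤ (n+4)/2, κ ≥ 0, λ ≥ 0, and let e_n be a fixed unit vector in ℝⁿ. Then max_{|z|=1} ∫_{S^{n-1}} ω_{κ,λ}(⟨e_σ, e_n⟩) |⟨e_σ, e_n⟩|^{(n-p+2)/(p-1)} |⟨e_σ, z⟩|^{p/(p-1)} dσ = ∫_{S^{n-1}} ω_{κ,λ}(⟨e_σ, e_n⟩) |⟨e_σ, e_n⟩|^{(n-2p+4)/(p-1) + 2} dσ, i.e., the maximum over unit vectors z is attained at z = e_n. -/

import Mathlib

/-!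
Put `x = ⟨σ, eₙ⟩`, `y = ⟨σ, z⟩`, `μ = (n - 2p + 4)/(p - 1) ≥ 0`, `ν = (p - 2)/(p - 1) ∈ [0, 1)`, so that
the integrand is `f(x) |x|^ν |y|^(2-ν)` with `f(u) = ω_{κ,λ}(u) |u|^μ`. The function `f` is
nondecreasing in `|u|`: `ω_{κ,λ}` is an integral over a half-line that grows with `|u|`.

Weighted AM-GM gives `|x|^ν |y|^(2-ν) ≤ (ν/2) x² + (1 - ν/2) y²`, with equality for `z = eₙ`, so it
suffices to prove `∫ f(x) y² ≤ ∫ f(x) x²`. The reflection exchanging `eₙ` and `z` preserves the surface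
measure and exchanges `x` and `y`; averaging each side with its reflected version turns the
difference into `½ ∫ (f(x) - f(y)) (x² - y²)`, whose integrand is nonnegative by monotonicity
(`integral_mul_inner_sq_le`).
-/

open MeasureTheory Real RealInnerProductSpace

/-- The function `ω_{κ,λ}`. -/
noncomputable def omegaKL (κ lam u : ℝ) : ℝ :=
  if u = 0 then (if κ = 0 then Real.Gamma (lam + 1) else 0)
  else ∫ ξ in Set.Ioi (κ / u ^ 2), ξ ^ lam * Real.exp (-ξ)

lemma measurable_of_abs_mono {f : ℝ → ℝ} (hf : ∀ u v, |u| ≤ |v| → f u ≤ f v) : Measurable f := by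
  have h1 : Monotone fun t : ℝ => f (max t 0) := fun s t hst => hf _ _ (by
    rw [abs_of_nonneg (le_max_right _ _), abs_of_nonneg (le_max_right _ _)]
    exact max_le_max_right _ hst)
  have h2 : f = (fun t : ℝ => f (max t 0)) ∘ fun u => |u| := by
    funext u
    simp only [Function.comp, max_eq_left (abs_nonneg u)]
    exact le_antisymm (hf _ _ (by simp)) (hf _ _ (by simp))
  rw [h2]
  exact h1.measurable.comp measurable_abs

section Sphere

variable {E : Type*} [NormedAddCommGroup E] [InnerProductSpace ℝ E]

/-- The self-map of the unit sphere induced by a linear isometry. -/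
def sphereMap (R : E ≃ₗᵢ[ℝ] E) (σ : Metric.sphere (0 : E) 1) : Metric.sphere (0 : E) 1 :=
  ⟨R σ, by simp⟩

lemma continuous_sphereMap (R : E ≃ₗᵢ[ℝ] E) : Continuous (sphereMap R) :=
  (R.continuous.comp continuous_subtype_val).subtype_mk _

lemma abs_inner_sphere_le_one {e : E} (he : ‖e‖ = 1) (σ : Metric.sphere (0 : E) 1) :
    |⟪(σ : E), e⟫| ≤ 1 := by
  simpa [he] using abs_real_inner_le_norm (σ : E) e

lemma measurable_inner_sphere [MeasurableSpace E] [BorelSpace E] (e : E) :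
    Measurable fun σ : Metric.sphere (0 : E) 1 => ⟪(σ : E), e⟫ :=
  (continuous_subtype_val.inner continuous_const).measurable

variable [FiniteDimensional ℝ E] [MeasurableSpace E] [BorelSpace E]

open scoped Pointwise in
/-- The surface measure is rotation invariant, because the cone over the preimage of a set is the
preimage of the cone over it. -/
lemma measurePreserving_sphereMap (R : E ≃ₗᵢ[ℝ] E) :
    MeasurePreserving (sphereMap R) (volume : Measure E).toSphere (volume : Measure E).toSphere := by
  refine ⟨(continuous_sphereMap R).measurable, ?_⟩
  ext s hs
  have hm := (continuous_sphereMap R).measurable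
  rw [Measure.map_apply hm hs, Measure.toSphere_apply' _ (hm hs), Measure.toSphere_apply' _ hs]
  congr 1
  rw [← R.measurePreserving.measure_preimage_equiv (f := R.toMeasurableEquiv)
    (Set.Ioo (0 : ℝ) 1 • (Subtype.val '' s))]
  congr 1
  ext v
  simp only [Set.mem_smul, Set.mem_preimage, Set.mem_image]
  constructor
  · rintro ⟨r, hr, _, ⟨σ, hσ, rfl⟩, rfl⟩
    exact ⟨r, hr, _, ⟨_, hσ, rfl⟩, by simp [sphereMap]⟩
  · rintro ⟨r, hr, _, ⟨σ, hσ, rfl⟩, h⟩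
    refine ⟨r, hr, _, ⟨sphereMap R.symm σ, ?_, rfl⟩, ?_⟩
    · convert! hσ
      simp [sphereMap]
    · apply R.injective
      simpa [sphereMap] using h

lemma integrable_mul_inner_sq {f : ℝ → ℝ} (hf : ∀ u v, |u| ≤ |v| → f u ≤ f v)
    {e z : E} (he : ‖e‖ = 1) (hz : ‖z‖ = 1) :
    Integrable (fun σ : Metric.sphere (0 : E) 1 => f ⟪(σ : E), e⟫ * ⟪(σ : E), z⟫ ^ 2)
      (volume : Measure E).toSphere := by
  refine Integrable.of_bound (C := max |f 0| |f 1|) ?_ (Filter.Eventually.of_forall fun σ => ?_)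
  · exact (((measurable_of_abs_mono hf).comp (measurable_inner_sphere e)).mul
      ((measurable_inner_sphere z).pow_const 2)).aestronglyMeasurable
  · rw [norm_mul, Real.norm_eq_abs, Real.norm_eq_abs, abs_pow]
    have h1 : |f ⟪(σ : E), e⟫| ≤ max |f 0| |f 1| :=
      abs_le_max_abs_abs (hf _ _ (by simp)) (hf _ _ (by simpa using abs_inner_sphere_le_one he σ))
    have h2 : |⟪(σ : E), z⟫| ^ 2 ≤ 1 := pow_le_one₀ (abs_nonneg _) (abs_inner_sphere_le_one hz σ)
    calc _ ≤ max |f 0| |f 1| * 1 := by gcongr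
      _ = _ := mul_one _

/-- A Chebyshev-type inequality on the sphere: for `f` nondecreasing in `|u|`, the second moment
of the weight `f ⟪σ, e⟫` is largest in the direction `e`. -/
lemma integral_mul_inner_sq_le {f : ℝ → ℝ} (hf : ∀ u v, |u| ≤ |v| → f u ≤ f v)
    {e z : E} (he : ‖e‖ = 1) (hz : ‖z‖ = 1) :
    ∫ σ : Metric.sphere (0 : E) 1, f ⟪(σ : E), e⟫ * ⟪(σ : E), z⟫ ^ 2
        ∂(volume : Measure E).toSphere ≤
      ∫ σ : Metric.sphere (0 : E) 1, f ⟪(σ : E), e⟫ * ⟪(σ : E), e⟫ ^ 2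
        ∂(volume : Measure E).toSphere := by
  set R : E ≃ₗᵢ[ℝ] E := (ℝ ∙ (e - z))ᗮ.reflection with hR
  have hRe : R e = z := Submodule.reflection_sub (he.trans hz.symm)
  have hRz : R z = e := by rw [← hRe, hR, Submodule.reflection_reflection]
  have hie : ∀ σ : E, ⟪R σ, e⟫ = ⟪σ, z⟫ := fun σ => by rw [← hRz, R.inner_map_map]
  have hiz : ∀ σ : E, ⟪R σ, z⟫ = ⟪σ, e⟫ := fun σ => by
    conv_lhs => rw [← hRe, R.inner_map_map]
  have hmp := measurePreserving_sphereMap R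
  have hinv : ∀ g : Metric.sphere (0 : E) 1 → ℝ,
      AEStronglyMeasurable g (volume : Measure E).toSphere →
      ∫ σ, g σ ∂(volume : Measure E).toSphere =
        ∫ σ, g (sphereMap R σ) ∂(volume : Measure E).toSphere := fun g hg => by
    conv_lhs => rw [← hmp.map_eq]
    exact integral_map hmp.measurable.aemeasurable (by rwa [hmp.map_eq])
  have h1 := hinv _ (integrable_mul_inner_sq hf he hz).1
  have h2 := hinv _ (integrable_mul_inner_sq hf he he).1
  simp only [sphereMap, hie, hiz] at h1 h2
  have key : ∫ σ : Metric.sphere (0 : E) 1, (f ⟪(σ : E), e⟫ * ⟪(σ : E), z⟫ ^ 2 +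
        f ⟪(σ : E), z⟫ * ⟪(σ : E), e⟫ ^ 2) ∂(volume : Measure E).toSphere ≤
      ∫ σ : Metric.sphere (0 : E) 1, (f ⟪(σ : E), e⟫ * ⟪(σ : E), e⟫ ^ 2 +
        f ⟪(σ : E), z⟫ * ⟪(σ : E), z⟫ ^ 2) ∂(volume : Measure E).toSphere := by
    refine integral_mono
      ((integrable_mul_inner_sq hf he hz).add (integrable_mul_inner_sq hf hz he))
      ((integrable_mul_inner_sq hf he he).add (integrable_mul_inner_sq hf hz hz)) fun σ => ?_
    dsimp only
    rcases le_total |⟪(σ : E), e⟫| |⟪(σ : E), z⟫| with h | h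
    · nlinarith [hf _ _ h, sq_le_sq.2 h]
    · nlinarith [hf _ _ h, sq_le_sq.2 h]
  rw [integral_add (integrable_mul_inner_sq hf he hz) (integrable_mul_inner_sq hf hz he),
    integral_add (integrable_mul_inner_sq hf he he) (integrable_mul_inner_sq hf hz hz)] at key
  linarith

end Sphere

lemma omegaKL_nonneg {κ lam : ℝ} (hκ : 0 ≤ κ) (hlam : 0 ≤ lam) (u : ℝ) : 0 ≤ omegaKL κ lam u := by
  unfold omegaKL
  split_ifs
  · exact (Real.Gamma_pos_of_pos (by linarith)).le
  · exact le_rfl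
  · refine setIntegral_nonneg measurableSet_Ioi fun ξ hξ => ?_
    have : 0 ≤ ξ := le_trans (by positivity) (le_of_lt hξ)
    positivity

lemma omegaKL_mono {κ lam : ℝ} (hκ : 0 ≤ κ) (hlam : 0 ≤ lam) {u v : ℝ} (h : |u| ≤ |v|) :
    omegaKL κ lam u ≤ omegaKL κ lam v := by
  rcases hκ.eq_or_lt with rfl | hκ'
  · -- for `κ = 0` the function is constant
    have hc : ∀ u, omegaKL 0 lam u = Real.Gamma (lam + 1) := fun u => by
      by_cases hu : u = 0
      · simp [omegaKL, hu]
      · rw [omegaKL, if_neg hu, Real.Gamma_eq_integral (by linarith)]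
        simp [mul_comm]
    rw [hc, hc]
  · by_cases hu : u = 0
    · have : omegaKL κ lam u = 0 := by simp [omegaKL, hu, hκ'.ne']
      rw [this]
      exact omegaKL_nonneg hκ hlam v
    have hu' : 0 < |u| := abs_pos.2 hu
    have hv : v ≠ 0 := abs_pos.1 (hu'.trans_le h)
    unfold omegaKL
    rw [if_neg hu, if_neg hv]
    have hsub : Set.Ioi (κ / v ^ 2) ⊆ Set.Ioi 0 := Set.Ioi_subset_Ioi (by positivity)
    have hint : IntegrableOn (fun ξ : ℝ => ξ ^ lam * Real.exp (-ξ)) (Set.Ioi 0) := by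
      simpa [mul_comm] using Real.GammaIntegral_convergent (s := lam + 1) (by linarith)
    refine setIntegral_mono_set (hint.mono_set hsub) ?_
      (Filter.Eventually.of_forall (Set.Ioi_subset_Ioi ?_))
    · filter_upwards [ae_restrict_mem measurableSet_Ioi] with ξ hξ
      have : 0 < ξ := hsub hξ
      simp only [Pi.zero_apply]
      positivity
    · have := sq_le_sq.2 h
      gcongr

/-- Weighted AM-GM for `x²` and `y²` with weights `ν/2` and `1 - ν/2`. -/
lemma rpow_mul_rpow_le {ν x y : ℝ} (h0 : 0 ≤ ν) (h1 : ν ≤ 2) (hx : 0 ≤ x) (hy : 0 ≤ y) :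
    x ^ ν * y ^ (2 - ν) ≤ ν / 2 * x ^ 2 + (1 - ν / 2) * y ^ 2 := by
  have h := Real.geom_mean_le_arith_mean2_weighted (w₁ := ν / 2) (w₂ := 1 - ν / 2) (by linarith)
    (by linarith) (sq_nonneg x) (sq_nonneg y) (by ring)
  rw [← Real.rpow_natCast_mul hx, ← Real.rpow_natCast_mul hy] at h
  convert! h using 3
  · push_cast; ring
  · push_cast; ring

/-- The extremal problem for the Neumann heat estimate: for `2 ≤ p ≤ (n+4)/2` the maximum
over unit vectors `z` of
`∫_{S^{n-1}} ω_{κ,λ}(⟨e_σ,eₙ⟩)|⟨e_σ,eₙ⟩|^{(n-p+2)/(p-1)}|⟨e_σ,z⟩|^{p/(p-1)} dσ`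
is attained at `z = eₙ`, and equals
`∫_{S^{n-1}} ω_{κ,λ}(⟨e_σ,eₙ⟩)|⟨e_σ,eₙ⟩|^{(n-2p+4)/(p-1)+2} dσ`. -/
theorem stmt_18 (n : ℕ) (hn : 2 ≤ n) (p : ℝ) (hp : 2 ≤ p) (hp' : p ≤ ((n : ℝ) + 4) / 2)
    (κ lam : ℝ) (hκ : 0 ≤ κ) (hlam : 0 ≤ lam)
    (en : EuclideanSpace ℝ (Fin n)) (hen : ‖en‖ = 1)
    (I : EuclideanSpace ℝ (Fin n) → ℝ)
    (hI : ∀ z : EuclideanSpace ℝ (Fin n),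
      I z = ∫ σ : Metric.sphere (0 : EuclideanSpace ℝ (Fin n)) 1,
        omegaKL κ lam ⟪(σ : EuclideanSpace ℝ (Fin n)), en⟫ *
          |⟪(σ : EuclideanSpace ℝ (Fin n)), en⟫| ^ (((n : ℝ) - p + 2) / (p - 1)) *
          |⟪(σ : EuclideanSpace ℝ (Fin n)), z⟫| ^ (p / (p - 1))
        ∂(volume : Measure (EuclideanSpace ℝ (Fin n))).toSphere) :
    (∀ z : EuclideanSpace ℝ (Fin n), ‖z‖ = 1 → I z ≤ I en) ∧
    I en = ∫ σ : Metric.sphere (0 : EuclideanSpace ℝ (Fin n)) 1,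
      omegaKL κ lam ⟪(σ : EuclideanSpace ℝ (Fin n)), en⟫ *
        |⟪(σ : EuclideanSpace ℝ (Fin n)), en⟫| ^ (((n : ℝ) - 2 * p + 4) / (p - 1) + 2)
      ∂(volume : Measure (EuclideanSpace ℝ (Fin n))).toSphere := by
  have hp1 : 0 < p - 1 := by linarith
  set μ : ℝ := ((n : ℝ) - 2 * p + 4) / (p - 1) with hμ
  set ν : ℝ := (p - 2) / (p - 1) with hν
  have hμ0 : 0 ≤ μ := div_nonneg (by linarith) hp1.le
  have hν0 : 0 ≤ ν := div_nonneg (by linarith) hp1.le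
  have hν1 : ν ≤ 1 := (div_le_one hp1).2 (by linarith)
  have ha : ((n : ℝ) - p + 2) / (p - 1) = μ + ν := by rw [hμ, hν]; field_simp; ring
  have hq : p / (p - 1) = 2 - ν := by rw [hν]; field_simp; ring
  rw [ha, hq] at hI
  set f : ℝ → ℝ := fun u => omegaKL κ lam u * |u| ^ μ with hf
  have hf0 : ∀ u, 0 ≤ f u := fun u =>
    mul_nonneg (omegaKL_nonneg hκ hlam u) (Real.rpow_nonneg (abs_nonneg u) _)
  have hmono : ∀ u v, |u| ≤ |v| → f u ≤ f v := fun u v h =>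
    mul_le_mul (omegaKL_mono hκ hlam h) (Real.rpow_le_rpow (abs_nonneg u) h hμ0)
      (Real.rpow_nonneg (abs_nonneg u) _) (omegaKL_nonneg hκ hlam v)
  have hsplit : ∀ u v : ℝ, omegaKL κ lam u * |u| ^ (μ + ν) * |v| ^ (2 - ν) =
      f u * (|u| ^ ν * |v| ^ (2 - ν)) := fun u v => by
    rw [Real.rpow_add_of_nonneg (abs_nonneg u) hμ0 hν0]; ring
  have hsq : ∀ u : ℝ, |u| ^ ν * |u| ^ (2 - ν) = u ^ 2 := fun u => by
    rw [← Real.rpow_add_of_nonneg (abs_nonneg u) hν0 (by linarith), add_sub_cancel, Real.rpow_two,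
      sq_abs]
  simp only [hsplit] at hI
  have hIen : I en = ∫ σ : Metric.sphere (0 : EuclideanSpace ℝ (Fin n)) 1,
      f ⟪(σ : EuclideanSpace ℝ (Fin n)), en⟫ * ⟪(σ : EuclideanSpace ℝ (Fin n)), en⟫ ^ 2
      ∂(volume : Measure (EuclideanSpace ℝ (Fin n))).toSphere := by
    simp only [hI, hsq]
  refine ⟨fun z hz => ?_, ?_⟩
  · have hie := integrable_mul_inner_sq hmono hen hen
    have hiz := integrable_mul_inner_sq hmono hen hz
    have hle : I z ≤ ∫ σ : Metric.sphere (0 : EuclideanSpace ℝ (Fin n)) 1,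
        (ν / 2 * (f ⟪(σ : EuclideanSpace ℝ (Fin n)), en⟫ *
            ⟪(σ : EuclideanSpace ℝ (Fin n)), en⟫ ^ 2) +
          (1 - ν / 2) * (f ⟪(σ : EuclideanSpace ℝ (Fin n)), en⟫ *
            ⟪(σ : EuclideanSpace ℝ (Fin n)), z⟫ ^ 2))
        ∂(volume : Measure (EuclideanSpace ℝ (Fin n))).toSphere := by
      rw [hI]
      refine integral_mono_of_nonneg (Filter.Eventually.of_forall fun σ => ?_)
        ((hie.const_mul _).add (hiz.const_mul _)) (Filter.Eventually.of_forall fun σ => ?_)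
      · exact mul_nonneg (hf0 _) (by positivity)
      · have h := mul_le_mul_of_nonneg_left (rpow_mul_rpow_le hν0 (by linarith)
          (abs_nonneg ⟪(σ : EuclideanSpace ℝ (Fin n)), en⟫)
          (abs_nonneg ⟪(σ : EuclideanSpace ℝ (Fin n)), z⟫))
          (hf0 ⟪(σ : EuclideanSpace ℝ (Fin n)), en⟫)
        rw [sq_abs, sq_abs] at h
        dsimp only
        linarith
    rw [integral_add (hie.const_mul _) (hiz.const_mul _), integral_const_mul, integral_const_mul,
      ← hIen] at hle
    have hcmp := integral_mul_inner_sq_le hmono hen hz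
    rw [← hIen] at hcmp
    nlinarith
  · rw [hIen]
    congr 1
    funext σ
    rw [Real.rpow_add_of_nonneg (abs_nonneg _) hμ0 (by norm_num), Real.rpow_two, sq_abs, ← mul_assoc]
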